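/- Let n ≥ 1 and let Ω ⊊ ℝⁿ be a nonempty open set with d(x) := dist(x, ℝⁿ∖Ω). Then for every s > n and every u ∈ C_c^∞(Ω), one has ∫_Ω |∇u| / d^{s−1} dx ≥ (s−n) · ∫_Ω |u| / d^s dx. -/

import Mathlib

open MeasureTheory Metric Set

/-!
Let `P x` be a nearest point of `Ωᶜ` to `x`, and slide `x` towards it along
`S t x = (1 - t) x + t P x`, so that `d (S t x) = (1 - t) d x`. As `u` vanishes at `P x`,
integrating `∇u` along this segment gives `|u x| ≤ d x * ∫ t in 0..1, |∇u (S t x)|`, that is,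
`|u x| / d x ^ s ≤ ∫ t in 0..1, (1 - t) ^ (s - 1) * g (S t x)` with `g = |∇u| / d ^ (s - 1)`.
Nearest point maps are monotone, so `S t` expands distances by a factor at least `1 - t` and
`∫ g ∘ S t ≤ (1 - t) ^ (-n) * ∫ g`. By Tonelli, `∫ |u| / d ^ s` is thus at most
`(∫ t in 0..1, (1 - t) ^ (s - 1 - n)) * ∫ g = (s - n)⁻¹ * ∫ g`.
-/

open AffineMap (lineMap)
open Module (finrank)
open scoped ENNReal NNReal RealInnerProductSpace

/-- `P` selects, for every point, a point of `K` at minimal distance. The choice need not be unique,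
and nothing is assumed about the regularity of `P`. -/
structure IsNearestPointMap {X : Type*} [PseudoMetricSpace X] (K : Set X) (P : X → X) : Prop where
  mem (x : X) : P x ∈ K
  dist_eq (x : X) : dist x (P x) = infDist x K

namespace IsNearestPointMap

section MetricSpace

variable {X : Type*} [PseudoMetricSpace X] {K : Set X}

theorem exists_of_isClosed [ProperSpace X] (hK : IsClosed K) (hne : K.Nonempty) :
    ∃ P, IsNearestPointMap K P := by
  choose P hmem hdist using hK.exists_infDist_eq_dist hne
  exact ⟨P, hmem, fun x => (hdist x).symm⟩

end MetricSpace

section NormedSpace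

variable {E : Type*} [NormedAddCommGroup E] [NormedSpace ℝ E] {K : Set E} {P : E → E}

theorem infDist_lineMap (hP : IsNearestPointMap K P) (x : E) {t : ℝ} (ht : t ∈ Icc 0 1) :
    infDist (lineMap x (P x) t) K = (1 - t) * infDist x K := by
  apply le_antisymm
  · calc infDist (lineMap x (P x) t) K ≤ dist (lineMap x (P x) t) (P x) :=
          infDist_le_dist_of_mem (hP.mem x)
      _ = (1 - t) * infDist x K := by
          rw [dist_lineMap_right, Real.norm_of_nonneg (sub_nonneg.2 ht.2), hP.dist_eq]
  · have htriangle : infDist x K ≤ infDist (lineMap x (P x) t) K + t * infDist x K := by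
      calc infDist x K ≤ infDist (lineMap x (P x) t) K + dist x (lineMap x (P x) t) :=
            infDist_le_infDist_add_dist
        _ = infDist (lineMap x (P x) t) K + t * infDist x K := by
            rw [dist_left_lineMap, Real.norm_of_nonneg ht.1, hP.dist_eq]
    linarith

theorem fderiv_infDist_apply (hP : IsNearestPointMap K P) {x : E}
    (hd : DifferentiableAt ℝ (infDist · K) x) :
    fderiv ℝ (infDist · K) x (P x - x) = -infDist x K := by
  have hchain : HasDerivWithinAt (fun t : ℝ => infDist (lineMap x (P x) t) K)
      (fderiv ℝ (infDist · K) x (P x - x)) (Icc 0 1) 0 := by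
    have hfd : HasFDerivAt (infDist · K) (fderiv ℝ (infDist · K) x)
        (lineMap x (P x) (0 : ℝ)) := by simpa using hd.hasFDerivAt
    exact (hfd.comp_hasDerivAt 0 AffineMap.hasDerivAt_lineMap).hasDerivWithinAt
  have hlinear : HasDerivWithinAt (fun t : ℝ => infDist (lineMap x (P x) t) K)
      (-infDist x K) (Icc 0 1) 0 := by
    refine HasDerivWithinAt.congr ?_ (fun t ht => hP.infDist_lineMap x ht) (by simp)
    simpa using (((hasDerivAt_id (0 : ℝ)).const_sub 1).mul_const (infDist x K)).hasDerivWithinAt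
  exact (uniqueDiffOn_Icc zero_lt_one 0 (by simp)).eq_deriv _ hchain hlinear

end NormedSpace

section InnerProductSpace

variable {E : Type*} [NormedAddCommGroup E] [InnerProductSpace ℝ E] {K : Set E} {P : E → E}

theorem inner_sub_sub_nonneg (hP : IsNearestPointMap K P) (x y : E) :
    0 ≤ ⟪P x - P y, x - y⟫ := by
  have hle (a b : E) : ‖a - P a‖ ^ 2 ≤ ‖a - P b‖ ^ 2 := by
    gcongr
    rw [← dist_eq_norm, ← dist_eq_norm, hP.dist_eq]
    exact infDist_le_dist_of_mem (hP.mem b)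
  have hx := hle x y
  have hy := hle y x
  simp only [norm_sub_sq_real] at hx hy
  simp only [inner_sub_right, real_inner_comm x, real_inner_comm y] at hx hy ⊢
  linarith

theorem antilipschitzWith_lineMap (hP : IsNearestPointMap K P) {t : ℝ} (ht : t ∈ Ico 0 1) :
    AntilipschitzWith (1 - t)⁻¹.toNNReal (fun x => lineMap x (P x) t) := by
  have ht' : 0 < 1 - t := sub_pos.2 ht.2
  refine AntilipschitzWith.of_le_mul_dist fun x y => ?_
  rw [Real.coe_toNNReal _ (inv_nonneg.2 ht'.le), inv_mul_eq_div, le_div_iff₀ ht', dist_eq_norm,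
    dist_eq_norm]
  rcases (norm_nonneg (x - y)).eq_or_lt with h | h
  · simp [← h]
  refine le_of_mul_le_mul_right ?_ h
  calc ‖x - y‖ * (1 - t) * ‖x - y‖
      ≤ (1 - t) * ‖x - y‖ ^ 2 + t * ⟪P x - P y, x - y⟫ := by
        linarith [mul_nonneg ht.1 (hP.inner_sub_sub_nonneg x y)]
    _ = ⟪lineMap x (P x) t - lineMap y (P y) t, x - y⟫ := by
        have hdiff : lineMap x (P x) t - lineMap y (P y) t
            = (1 - t) • (x - y) + t • (P x - P y) := by
          simp only [AffineMap.lineMap_apply_module]; module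
        rw [hdiff, inner_add_left, real_inner_smul_left, real_inner_smul_left,
          real_inner_self_eq_norm_sq]
    _ ≤ ‖lineMap x (P x) t - lineMap y (P y) t‖ * ‖x - y‖ := real_inner_le_norm _ _

theorem eq_sub_smul_gradient [CompleteSpace E] (hP : IsNearestPointMap K P) {x : E}
    (hd : DifferentiableAt ℝ (infDist · K) x) :
    P x = x - infDist x K • gradient (infDist · K) x := by
  set δ := infDist x K
  set g := gradient (infDist · K) x
  have hg : ‖g‖ ≤ 1 := by
    simpa [g, gradient] using norm_fderiv_le_of_lipschitz ℝ (lipschitz_infDist_pt K) (x₀ := x)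
  have hinner : ⟪g, P x - x⟫ = -δ := by
    simpa [g, gradient] using hP.fderiv_infDist_apply hd
  have hnorm : ‖P x - x‖ = δ := by rw [← dist_eq_norm, dist_comm, hP.dist_eq]
  have hsq : ‖P x - x + δ • g‖ ^ 2 ≤ 0 := by
    calc ‖P x - x + δ • g‖ ^ 2 = δ ^ 2 * (‖g‖ ^ 2 - 1) := by
          rw [norm_add_sq_real, real_inner_smul_right, real_inner_comm, hinner, norm_smul, hnorm,
            mul_pow, Real.norm_eq_abs, sq_abs]
          ring
      _ ≤ 0 := mul_nonpos_of_nonneg_of_nonpos (sq_nonneg δ)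
          (sub_nonpos.2 (pow_le_one₀ (norm_nonneg g) hg))
  have hzero : P x - x + δ • g = 0 := by simpa using hsq.antisymm (sq_nonneg _)
  rw [eq_sub_iff_add_eq, ← sub_eq_zero, ← hzero]
  abel

/-- By Rademacher's theorem `infDist · K` has a gradient almost everywhere, and there it determines
`P`. -/
theorem aemeasurable [FiniteDimensional ℝ E] [MeasurableSpace E] [BorelSpace E]
    (hP : IsNearestPointMap K P) (μ : Measure E) [μ.IsAddHaarMeasure] : AEMeasurable P μ := by
  have hgrad : Measurable (gradient (infDist · K) : E → E) :=
    (InnerProductSpace.toDual ℝ E).symm.continuous.measurable.comp (measurable_fderiv ℝ _)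
  have hmeas : Measurable fun x => x - infDist x K • gradient (infDist · K) x := by fun_prop
  refine ⟨_, hmeas, ?_⟩
  filter_upwards [(lipschitz_infDist_pt K).ae_differentiableAt (μ := μ)] with x hx
  exact hP.eq_sub_smul_gradient hx

end InnerProductSpace

end IsNearestPointMap

section Antilipschitz

variable {E : Type*} [NormedAddCommGroup E] [NormedSpace ℝ E] [FiniteDimensional ℝ E]
  [MeasurableSpace E] [BorelSpace E] (μ : Measure E) [μ.IsAddHaarMeasure] {S : E → E} {C : ℝ≥0}

theorem measure_le_pow_mul_measure_image_of_antilipschitzWith (hS : AntilipschitzWith C S)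
    (A : Set E) :
    μ A ≤ (C : ℝ≥0∞) ^ finrank ℝ E * μ (S '' A) := by
  have hH := hS.le_hausdorffMeasure_image (Nat.cast_nonneg (finrank ℝ E)) A
  rw [ENNReal.rpow_natCast] at hH
  rw [Measure.isAddLeftInvariant_eq_smul μ μH[finrank ℝ E], Measure.smul_apply,
    Measure.smul_apply, mul_smul_comm]
  gcongr

theorem map_le_pow_smul_of_antilipschitzWith (hS : AntilipschitzWith C S) (hSm : AEMeasurable S μ) :
    μ.map S ≤ (C : ℝ≥0∞) ^ finrank ℝ E • μ := by
  refine Measure.le_iff.2 fun A hA => ?_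
  calc μ.map S A = μ (S ⁻¹' A) := Measure.map_apply_of_aemeasurable hSm hA
    _ ≤ (C : ℝ≥0∞) ^ finrank ℝ E * μ (S '' (S ⁻¹' A)) :=
        measure_le_pow_mul_measure_image_of_antilipschitzWith μ hS _
    _ ≤ (C : ℝ≥0∞) ^ finrank ℝ E * μ A := by gcongr; exact image_preimage_subset S A

theorem lintegral_comp_le_pow_mul_of_antilipschitzWith (hS : AntilipschitzWith C S)
    (hSm : AEMeasurable S μ) {G : E → ℝ≥0∞} (hG : Measurable G) :
    ∫⁻ x, G (S x) ∂μ ≤ (C : ℝ≥0∞) ^ finrank ℝ E * ∫⁻ x, G x ∂μ := by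
  rw [← lintegral_map' hG.aemeasurable hSm, ← smul_eq_mul, ← lintegral_smul_measure]
  exact lintegral_mono' (map_le_pow_smul_of_antilipschitzWith μ hS hSm) le_rfl

end Antilipschitz

theorem lintegral_Ioo_one_sub_rpow {r : ℝ} (hr : -1 < r) :
    ∫⁻ t in Ioo (0 : ℝ) 1, ENNReal.ofReal ((1 - t) ^ r) = ENNReal.ofReal (r + 1)⁻¹ := by
  have hint : IntervalIntegrable (fun t : ℝ => (1 - t) ^ r) volume 0 1 := by
    simpa using (intervalIntegral.intervalIntegrable_rpow' hr (a := 1) (b := 0)).comp_sub_left 1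
  rw [restrict_Ioo_eq_restrict_Ioc, ← ofReal_integral_eq_lintegral_ofReal hint.1,
    ← intervalIntegral.integral_of_le zero_le_one,
    intervalIntegral.integral_comp_sub_left (fun t => t ^ r), integral_rpow (Or.inl hr)]
  · simp [Real.zero_rpow (by linarith : r + 1 ≠ 0)]
  · filter_upwards [ae_restrict_mem measurableSet_Ioc] with t ht
    exact Real.rpow_nonneg (sub_nonneg.2 ht.2) r

theorem enorm_sub_le_enorm_mul_lintegral_enorm_fderiv_lineMap {E F : Type*}
    [NormedAddCommGroup E] [NormedSpace ℝ E] [NormedAddCommGroup F] [NormedSpace ℝ F]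
    {u : E → F} (hu : ContDiff ℝ 1 u) (x y : E) :
    ‖u y - u x‖ₑ ≤ ‖y - x‖ₑ * ∫⁻ t in Ioo (0 : ℝ) 1, ‖fderiv ℝ u (lineMap x y t)‖ₑ := by
  have hline : ContDiff ℝ 1 fun t : ℝ => u (lineMap x y t) :=
    hu.comp (AffineMap.contDiff_lineMap x y)
  have hderiv (t : ℝ) : deriv (fun t : ℝ => u (lineMap x y t)) t
      = fderiv ℝ u (lineMap x y t) (y - x) :=
    ((hu.differentiable one_ne_zero _).hasFDerivAt.comp_hasDerivAt t
      AffineMap.hasDerivAt_lineMap).deriv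
  calc ‖u y - u x‖ₑ
      ≤ ∫⁻ t in Icc (0 : ℝ) 1, ‖deriv (fun t : ℝ => u (lineMap x y t)) t‖ₑ := by
        simpa using enorm_sub_le_lintegral_deriv_of_contDiffOn_Icc hline.contDiffOn zero_le_one
    _ ≤ ∫⁻ t in Ioo (0 : ℝ) 1, ‖y - x‖ₑ * ‖fderiv ℝ u (lineMap x y t)‖ₑ := by
        rw [← restrict_Ioo_eq_restrict_Icc]
        gcongr with t
        rw [hderiv, mul_comm]
        exact ContinuousLinearMap.le_opENorm _ _
    _ = _ := lintegral_const_mul' _ _ enorm_ne_top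

theorem integrableOn_norm_div_infDist_rpow {X G : Type*} [MetricSpace X] [MeasurableSpace X]
    [OpensMeasurableSpace X] (μ : Measure X) [IsFiniteMeasureOnCompacts μ] [NormedAddCommGroup G]
    {Ω : Set X} (hΩ : IsOpen Ω) (hΩ_ne : Ω ≠ univ) (r : ℝ) {v : X → G} (hv : Continuous v)
    (hcomp : HasCompactSupport v) (hsupp : tsupport v ⊆ Ω) :
    IntegrableOn (fun x => ‖v x‖ / infDist x Ωᶜ ^ r) Ω μ := by
  have hpos (x : X) (hx : x ∈ tsupport v) : 0 < infDist x Ωᶜ :=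
    (hΩ.isClosed_compl.notMem_iff_infDist_pos (nonempty_compl.2 hΩ_ne)).1
      (notMem_compl_iff.2 (hsupp hx))
  have hcont : ContinuousOn (fun x => ‖v x‖ / infDist x Ωᶜ ^ r) (tsupport v) :=
    hv.norm.continuousOn.div
      ((continuous_infDist_pt _).continuousOn.rpow_const fun x hx => Or.inl (hpos x hx).ne')
      fun x hx => (Real.rpow_pos_of_pos (hpos x hx) r).ne'
  refine (hcont.integrableOn_compact hcomp).of_forall_sdiff_eq_zero hΩ.measurableSet
    fun x hx => ?_
  simp [image_eq_zero_of_notMem_tsupport hx.2]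

theorem IsNearestPointMap.ofReal_norm_div_infDist_rpow_le_lintegral {E F : Type*}
    [NormedAddCommGroup E] [NormedSpace ℝ E] [NormedAddCommGroup F] [NormedSpace ℝ F]
    {K : Set E} {P : E → E} {u : E → F} (hP : IsNearestPointMap K P)
    (hu : ContDiff ℝ 1 u) (huK : ∀ x ∈ K, u x = 0) {x : E} (hx : 0 < infDist x K) (s : ℝ) :
    ENNReal.ofReal (‖u x‖ / infDist x K ^ s) ≤
      ∫⁻ t in Ioo (0 : ℝ) 1, ENNReal.ofReal ((1 - t) ^ (s - 1)) *
        ENNReal.ofReal (‖fderiv ℝ u (lineMap x (P x) t)‖ /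
          infDist (lineMap x (P x) t) K ^ (s - 1)) := by
  have hnorm : ‖u x‖ₑ ≤ ENNReal.ofReal (infDist x K) *
      ∫⁻ t in Ioo (0 : ℝ) 1, ‖fderiv ℝ u (lineMap x (P x) t)‖ₑ := by
    rw [← hP.dist_eq, dist_comm, dist_eq_norm, ofReal_norm]
    simpa [huK _ (hP.mem x)] using enorm_sub_le_enorm_mul_lintegral_enorm_fderiv_lineMap hu x (P x)
  calc ENNReal.ofReal (‖u x‖ / infDist x K ^ s)
      = ENNReal.ofReal (infDist x K ^ s)⁻¹ * ‖u x‖ₑ := by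
        rw [div_eq_inv_mul, ENNReal.ofReal_mul (by positivity), ofReal_norm]
    _ ≤ ENNReal.ofReal (infDist x K ^ s)⁻¹ * (ENNReal.ofReal (infDist x K) *
          ∫⁻ t in Ioo (0 : ℝ) 1, ‖fderiv ℝ u (lineMap x (P x) t)‖ₑ) := by gcongr
    _ = ∫⁻ t in Ioo (0 : ℝ) 1, ENNReal.ofReal (infDist x K ^ (s - 1))⁻¹ *
          ‖fderiv ℝ u (lineMap x (P x) t)‖ₑ := by
        rw [lintegral_const_mul' _ _ ENNReal.ofReal_ne_top, ← mul_assoc,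
          ← ENNReal.ofReal_mul (by positivity), Real.rpow_sub_one hx.ne', inv_div, inv_mul_eq_div]
    _ = _ := by
        refine setLIntegral_congr_fun measurableSet_Ioo fun t ht => ?_
        have ht' : 0 < 1 - t := sub_pos.2 ht.2
        rw [hP.infDist_lineMap x (Ioo_subset_Icc_self ht), Real.mul_rpow ht'.le hx.le,
          ← ofReal_norm, ← ENNReal.ofReal_mul (by positivity), ← ENNReal.ofReal_mul (by positivity)]
        congr 1
        field_simp

section Hardy

variable {E F : Type*} [NormedAddCommGroup E] [InnerProductSpace ℝ E] [FiniteDimensional ℝ E]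
  [MeasurableSpace E] [BorelSpace E] (μ : Measure E) [μ.IsAddHaarMeasure]
  [NormedAddCommGroup F] [NormedSpace ℝ F] {K : Set E} {P : E → E} {u : E → F}

theorem IsNearestPointMap.lintegral_comp_lineMap_le (hP : IsNearestPointMap K P) {G : E → ℝ≥0∞}
    (hG : Measurable G) {t : ℝ} (ht : t ∈ Ico 0 1) :
    ∫⁻ x, G (lineMap x (P x) t) ∂μ ≤
      ENNReal.ofReal ((1 - t) ^ (-(finrank ℝ E : ℝ))) * ∫⁻ x, G x ∂μ := by
  have ht' : 0 < 1 - t := sub_pos.2 ht.2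
  have hmeas : AEMeasurable (fun x => lineMap x (P x) t) μ := by
    have := hP.aemeasurable μ
    simp only [AffineMap.lineMap_apply_module]
    fun_prop
  have hconst : ((1 - t)⁻¹.toNNReal : ℝ≥0∞) ^ finrank ℝ E
      = ENNReal.ofReal ((1 - t) ^ (-(finrank ℝ E : ℝ))) := by
    rw [← ENNReal.ofReal, ← ENNReal.ofReal_pow (by positivity), inv_pow, Real.rpow_neg ht'.le,
      Real.rpow_natCast]
  rw [← hconst]
  exact lintegral_comp_le_pow_mul_of_antilipschitzWith μ (hP.antilipschitzWith_lineMap ht) hmeas hG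

theorem IsNearestPointMap.lintegral_lintegral_rpow_mul_comp_lineMap_le
    (hP : IsNearestPointMap K P) {G : E → ℝ≥0∞} (hG : Measurable G) {s : ℝ} (hs : finrank ℝ E < s) :
    ∫⁻ x, (∫⁻ t in Ioo (0 : ℝ) 1, ENNReal.ofReal ((1 - t) ^ (s - 1)) * G (lineMap x (P x) t)) ∂μ ≤
      ENNReal.ofReal (s - finrank ℝ E)⁻¹ * ∫⁻ x, G x ∂μ := by
  set n := finrank ℝ E
  have hmeas : AEMeasurable (fun z : E × ℝ => ENNReal.ofReal ((1 - z.2) ^ (s - 1)) *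
      G (lineMap z.1 (P z.1) z.2)) (μ.prod (volume.restrict (Ioo 0 1))) := by
    have hlineMap : AEMeasurable (fun z : E × ℝ => lineMap z.1 (P z.1) z.2)
        (μ.prod (volume.restrict (Ioo 0 1))) := by
      have hPm := (hP.aemeasurable μ).comp_fst (ν := volume.restrict (Ioo (0 : ℝ) 1))
      simp only [AffineMap.lineMap_apply_module]
      exact ((measurable_snd.const_sub 1).smul measurable_fst).aemeasurable.add
        (measurable_snd.aemeasurable.smul hPm)
    exact (by fun_prop : Measurable fun z : E × ℝ => ENNReal.ofReal ((1 - z.2) ^ (s - 1)))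
      |>.aemeasurable.mul (hG.comp_aemeasurable hlineMap)
  calc ∫⁻ x, (∫⁻ t in Ioo (0 : ℝ) 1, ENNReal.ofReal ((1 - t) ^ (s - 1)) * G (lineMap x (P x) t)) ∂μ
      = ∫⁻ t in Ioo (0 : ℝ) 1, ENNReal.ofReal ((1 - t) ^ (s - 1)) *
          (∫⁻ x, G (lineMap x (P x) t) ∂μ) := by
        rw [lintegral_lintegral_swap hmeas]
        simp only [lintegral_const_mul' _ _ ENNReal.ofReal_ne_top]
    _ ≤ ∫⁻ t in Ioo (0 : ℝ) 1, ENNReal.ofReal ((1 - t) ^ (s - n - 1)) * (∫⁻ x, G x ∂μ) := by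
        refine setLIntegral_mono' measurableSet_Ioo fun t ht => ?_
        have ht' : 0 < 1 - t := sub_pos.2 ht.2
        rw [show s - n - 1 = s - 1 + -(n : ℝ) by ring, Real.rpow_add ht',
          ENNReal.ofReal_mul (by positivity), mul_assoc]
        gcongr
        exact hP.lintegral_comp_lineMap_le μ hG (Ioo_subset_Ico_self ht)
    _ = ENNReal.ofReal (s - n)⁻¹ * ∫⁻ x, G x ∂μ := by
        rw [lintegral_mul_const _ (by fun_prop), lintegral_Ioo_one_sub_rpow (by linarith),
          sub_add_cancel]

theorem setLIntegral_norm_div_infDist_rpow_le (hK : IsClosed K) (hne : K.Nonempty) {s : ℝ}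
    (hs : finrank ℝ E < s) (hu : ContDiff ℝ 1 u) (huK : ∀ x ∈ K, u x = 0) :
    ∫⁻ x in Kᶜ, ENNReal.ofReal (‖u x‖ / infDist x K ^ s) ∂μ ≤
      ENNReal.ofReal (s - finrank ℝ E)⁻¹ *
        ∫⁻ x in Kᶜ, ENNReal.ofReal (‖fderiv ℝ u x‖ / infDist x K ^ (s - 1)) ∂μ := by
  obtain ⟨P, hP⟩ := IsNearestPointMap.exists_of_isClosed hK hne
  set g : E → ℝ≥0∞ := fun x => ENNReal.ofReal (‖fderiv ℝ u x‖ / infDist x K ^ (s - 1))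
  have hpos {x : E} : x ∈ Kᶜ ↔ 0 < infDist x K := hK.notMem_iff_infDist_pos hne
  have hg : Measurable g := by
    have := (hu.continuous_fderiv one_ne_zero).norm.measurable
    fun_prop
  calc ∫⁻ x in Kᶜ, ENNReal.ofReal (‖u x‖ / infDist x K ^ s) ∂μ
      ≤ ∫⁻ x in Kᶜ, (∫⁻ t in Ioo (0 : ℝ) 1, ENNReal.ofReal ((1 - t) ^ (s - 1)) *
          Kᶜ.indicator g (lineMap x (P x) t)) ∂μ := by
        refine setLIntegral_mono' hK.measurableSet.compl fun x hx => ?_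
        refine (hP.ofReal_norm_div_infDist_rpow_le_lintegral hu huK (hpos.1 hx) s).trans_eq ?_
        refine setLIntegral_congr_fun measurableSet_Ioo fun t ht => ?_
        have hmem : lineMap x (P x) t ∈ Kᶜ := by
          rw [hpos, hP.infDist_lineMap x (Ioo_subset_Icc_self ht)]
          exact mul_pos (sub_pos.2 ht.2) (hpos.1 hx)
        simp only [indicator_of_mem hmem, g]
    _ ≤ ∫⁻ x, (∫⁻ t in Ioo (0 : ℝ) 1, ENNReal.ofReal ((1 - t) ^ (s - 1)) *
          Kᶜ.indicator g (lineMap x (P x) t)) ∂μ := setLIntegral_le_lintegral Kᶜ _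
    _ ≤ ENNReal.ofReal (s - finrank ℝ E)⁻¹ * ∫⁻ x, Kᶜ.indicator g x ∂μ :=
        hP.lintegral_lintegral_rpow_mul_comp_lineMap_le μ (hg.indicator hK.measurableSet.compl) hs
    _ = ENNReal.ofReal (s - finrank ℝ E)⁻¹ * ∫⁻ x in Kᶜ, g x ∂μ := by
        rw [lintegral_indicator hK.measurableSet.compl]

theorem l1_weighted_hardy_general_general {Ω : Set E} (hΩ : IsOpen Ω) (hΩ_ne : Ω ≠ univ) {s : ℝ}
    (hs : finrank ℝ E < s) (hu : ContDiff ℝ 1 u) (hu_zero : ∀ x ∉ Ω, u x = 0)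
    (hint : IntegrableOn (fun x => ‖fderiv ℝ u x‖ / infDist x Ωᶜ ^ (s - 1)) Ω μ) :
    (s - finrank ℝ E) * ∫ x in Ω, ‖u x‖ / infDist x Ωᶜ ^ s ∂μ ≤
      ∫ x in Ω, ‖fderiv ℝ u x‖ / infDist x Ωᶜ ^ (s - 1) ∂μ := by
  have hs' : 0 < s - finrank ℝ E := sub_pos.2 hs
  have hnonneg (r : ℝ) {v : E → ℝ} (hv : 0 ≤ v) :
      0 ≤ᵐ[μ.restrict Ω] fun x => v x / infDist x Ωᶜ ^ r :=
    ae_of_all _ fun x => div_nonneg (hv x) (Real.rpow_nonneg infDist_nonneg r)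
  have hmeas : AEStronglyMeasurable (fun x => ‖u x‖ / infDist x Ωᶜ ^ s) (μ.restrict Ω) := by
    have := hu.continuous.norm.measurable
    exact (by fun_prop : Measurable _).aestronglyMeasurable
  have hmain := setLIntegral_norm_div_infDist_rpow_le μ hΩ.isClosed_compl
    (nonempty_compl.2 hΩ_ne) hs hu hu_zero
  rw [compl_compl, ← ofReal_integral_eq_lintegral_ofReal hint
    (hnonneg _ fun x => norm_nonneg _), ← ENNReal.ofReal_mul (by positivity)] at hmain
  rw [← le_inv_mul_iff₀ hs', integral_eq_lintegral_of_nonneg_ae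
    (hnonneg s fun x => norm_nonneg _) hmeas]
  refine ENNReal.toReal_le_of_le_ofReal (mul_nonneg (by positivity) ?_) hmain
  exact integral_nonneg_of_ae (hnonneg _ fun x => norm_nonneg _)

end Hardy

/-- `L^1` weighted Hardy inequality on a general open set. -/
theorem l1_weighted_hardy_general (n : ℕ) (hn : 1 ≤ n)
    (Ω : Set (EuclideanSpace ℝ (Fin n))) (hΩo : IsOpen Ω) (hΩne : Ω.Nonempty)
    (hΩuniv : Ω ≠ Set.univ) :
    ∀ s : ℝ, (n : ℝ) < s →
    ∀ u : EuclideanSpace ℝ (Fin n) → ℝ, ContDiff ℝ (⊤ : ℕ∞) u →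
      HasCompactSupport u → tsupport u ⊆ Ω →
      (∫ x in Ω, ‖fderiv ℝ u x‖ / (Metric.infDist x Ωᶜ) ^ (s - 1)) ≥
        (s - n) * ∫ x in Ω, |u x| / (Metric.infDist x Ωᶜ) ^ s := by
  intro s hs u hu hcomp hsupp
  have hu' : ContDiff ℝ 1 u := hu.of_le (mod_cast le_top)
  simpa using l1_weighted_hardy_general_general volume hΩo hΩuniv (by simpa using hs) hu'
    (fun x hx => image_eq_zero_of_notMem_tsupport fun h => hx (hsupp h))
    (integrableOn_norm_div_infDist_rpow volume hΩo hΩuniv (s - 1)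
      (hu'.continuous_fderiv one_ne_zero) (hcomp.fderiv ℝ) ((tsupport_fderiv_subset ℝ).trans hsupp))
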